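/- arXiv:2110.03838 — 2 statements merged into one kernel-verified Lean document; each statement's English description precedes it below -/
import Mathlib

section
/- For every p ≥ 1, the on-diagonal coefficient matrix K ∈ ℝ^{N_p×N_p} is non-singular; consequently the linear system K G(h) ω(h) = c(h) has a unique solution whenever G(h) is non-singular. -/
/-- The set `𝓖_γ` of all sign changes of `(γ₁, γ₂)`. -/
def Gon (γ : ℕ × ℕ) : Finset (ℤ × ℤ) :=
  {((γ.1 : ℤ), (γ.2 : ℤ)), (-(γ.1 : ℤ), (γ.2 : ℤ)), ((γ.1 : ℤ), -(γ.2 : ℤ)),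
    (-(γ.1 : ℤ), -(γ.2 : ℤ))}

/-!
Even powers do not see signs, so the `j`-th column of `K` is `|𝓖_{ξ_j}|` times the column of all
monomials `x^{ξ_i}` evaluated at `(γ₁², γ₂²)` with `γ = ξ_j`. This leaves a multivariate Vandermonde
matrix at points of a grid, with exponents and grid indices running over the same lower set. Because
the exponents form a lower set, replacing monomials by products of monic polynomials of the same
degrees is a unitriangular change of basis and preserves the determinant. For the Newton polynomials
`∏_{k < n} (X - x_k)` the new matrix vanishes at `(α, β)` unless `α ≤ β`, so its determinant is the
product of its diagonal entries.
-/

open Finset Polynomial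

section Triangular

variable {ι α R : Type*} [Fintype ι] [DecidableEq ι] [PartialOrder α] [CommRing R]

theorem det_eq_prod_diag_of_not_le {b : ι → α} (hb : Function.Injective b) {M : Matrix ι ι R}
    (hM : ∀ i j, ¬b i ≤ b j → M i j = 0) : M.det = ∏ i, M i i := by
  let e : ι → LinearExtension α := fun i ↦ toLinearExtension (b i)
  let _ : LinearOrder ι := LinearOrder.lift' e hb
  refine Matrix.det_of_isUpperTriangular fun i j hji ↦ hM i j fun hij ↦ ?_
  exact not_le_of_gt hji (toLinearExtension.monotone hij : e i ≤ e j)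

theorem det_eq_prod_diag_of_not_ge {b : ι → α} (hb : Function.Injective b) {M : Matrix ι ι R}
    (hM : ∀ i j, ¬b j ≤ b i → M i j = 0) : M.det = ∏ i, M i i := by
  rw [← M.det_transpose]
  exact det_eq_prod_diag_of_not_le hb fun i j hij ↦ hM j i hij

end Triangular

section MultiVandermonde

/-- The multivariate Vandermonde matrix of the monomials with exponents `ξ i` at the points `v j`.
Rows are indexed by monomials and columns by points, as in `K`; this is the transpose of the
convention of `Matrix.vandermonde`. -/
def multiVandermonde {ι κ σ R : Type*} [Fintype σ] [CommRing R] (ξ : ι → σ → ℕ) (v : κ → σ → R) :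
    Matrix ι κ R :=
  Matrix.of fun i j ↦ ∏ s, v j s ^ ξ i s

variable {ι σ R : Type*} [Fintype ι] [Fintype σ] [CommRing R] {ξ : ι → σ → ℕ}

theorem prod_eval_eq_sum_of_isLowerSet (hξ : Function.Injective ξ)
    (hlow : IsLowerSet (Set.range ξ)) (Q : σ → R[X])
    (hQ : (fun s ↦ (Q s).natDegree) ∈ Set.range ξ) (y : σ → R) :
    ∏ s, (Q s).eval (y s) = ∑ i, (∏ s, (Q s).coeff (ξ i s)) * ∏ s, y s ^ ξ i s := by
  classical
  let term (m : σ → ℕ) : R := ∏ s, (Q s).coeff (m s) * y s ^ m s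
  let box := Fintype.piFinset fun s ↦ range ((Q s).natDegree + 1)
  have box_subset : box ⊆ univ.image ξ := by
    intro m hm
    have hle : m ≤ fun s ↦ (Q s).natDegree := fun s ↦
      Nat.lt_succ_iff.mp (mem_range.mp (Fintype.mem_piFinset.mp hm s))
    simpa only [mem_image, mem_univ, true_and, Set.mem_range] using hlow hle hQ
  have term_eq_zero : ∀ m ∉ box, term m = 0 := by
    intro m hm
    obtain ⟨s, hs⟩ : ∃ s, (Q s).natDegree < m s := by
      simpa [box, Fintype.mem_piFinset, Nat.lt_succ_iff] using hm
    exact prod_eq_zero (mem_univ s) (by rw [coeff_eq_zero_of_natDegree_lt hs, zero_mul])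
  calc ∏ s, (Q s).eval (y s) = ∑ m ∈ box, term m := by
        simp only [eval_eq_sum_range, prod_univ_sum, box, term]
    _ = ∑ m ∈ univ.image ξ, term m := sum_subset box_subset fun m _ ↦ term_eq_zero m
    _ = ∑ i, term (ξ i) := sum_image hξ.injOn
    _ = ∑ i, (∏ s, (Q s).coeff (ξ i s)) * ∏ s, y s ^ ξ i s := by
        simp only [term, prod_mul_distrib]

variable [DecidableEq ι]

theorem det_prod_coeff_eq_one_of_monic (hξ : Function.Injective ξ) {P : σ → ℕ → R[X]}
    (hmonic : ∀ s n, (P s n).Monic) (hdeg : ∀ s n, (P s n).natDegree = n) :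
    (Matrix.of fun i k ↦ ∏ s, (P s (ξ i s)).coeff (ξ k s)).det = 1 := by
  rw [det_eq_prod_diag_of_not_ge hξ]
  · refine prod_eq_one fun i _ ↦ prod_eq_one fun s _ ↦ ?_
    simpa only [hdeg] using (hmonic s (ξ i s)).coeff_natDegree
  · intro i k hki
    obtain ⟨s, hs⟩ : ∃ s, ξ i s < ξ k s := by simpa [Pi.le_def] using hki
    exact prod_eq_zero (mem_univ s) (coeff_eq_zero_of_natDegree_lt (by rwa [hdeg]))

theorem det_prod_eval_eq_det_multiVandermonde (hξ : Function.Injective ξ)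
    (hlow : IsLowerSet (Set.range ξ)) {P : σ → ℕ → R[X]}
    (hmonic : ∀ s n, (P s n).Monic) (hdeg : ∀ s n, (P s n).natDegree = n) (v : ι → σ → R) :
    (Matrix.of fun i j ↦ ∏ s, (P s (ξ i s)).eval (v j s)).det = (multiVandermonde ξ v).det := by
  have hfactor : (Matrix.of fun i j ↦ ∏ s, (P s (ξ i s)).eval (v j s)) =
      (Matrix.of fun i k ↦ ∏ s, (P s (ξ i s)).coeff (ξ k s)) * multiVandermonde ξ v := by
    ext i j
    exact prod_eval_eq_sum_of_isLowerSet hξ hlow _ ⟨i, funext fun s ↦ (hdeg s _).symm⟩ (v j)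
  rw [hfactor, Matrix.det_mul, det_prod_coeff_eq_one_of_monic hξ hmonic hdeg, one_mul]

theorem det_multiVandermonde_grid (hξ : Function.Injective ξ) (hlow : IsLowerSet (Set.range ξ))
    (x : σ → ℕ → R) :
    (multiVandermonde ξ fun j s ↦ x s (ξ j s)).det =
      ∏ i, ∏ s, ∏ k ∈ range (ξ i s), (x s (ξ i s) - x s k) := by
  nontriviality R
  let newton (s : σ) (n : ℕ) : R[X] := Lagrange.nodal (range n) (x s)
  have newton_natDegree (s : σ) (n : ℕ) : (newton s n).natDegree = n := by
    rw [Lagrange.natDegree_nodal, card_range]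
  rw [← det_prod_eval_eq_det_multiVandermonde hξ hlow (P := newton)
    (fun _ _ ↦ Lagrange.nodal_monic) newton_natDegree, det_eq_prod_diag_of_not_le hξ]
  · simp only [Matrix.of_apply, newton, Lagrange.eval_nodal]
  · intro i j hij
    obtain ⟨s, hs⟩ : ∃ s, ξ j s < ξ i s := by simpa [Pi.le_def] using hij
    exact prod_eq_zero (mem_univ s) (Lagrange.eval_nodal_at_node (mem_range.mpr hs))

theorem det_multiVandermonde_grid_ne_zero [IsDomain R] (hξ : Function.Injective ξ)
    (hlow : IsLowerSet (Set.range ξ)) {x : σ → ℕ → R} (hx : ∀ s, Function.Injective (x s)) :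
    (multiVandermonde ξ fun j s ↦ x s (ξ j s)).det ≠ 0 := by
  rw [det_multiVandermonde_grid hξ hlow]
  refine prod_ne_zero_iff.mpr fun i _ ↦ prod_ne_zero_iff.mpr fun s _ ↦
    prod_ne_zero_iff.mpr fun k hk ↦ sub_ne_zero.mpr ?_
  exact (hx s).ne (mem_range.mp hk).ne'

end MultiVandermonde

section OnDiagonalMatrix

theorem Gon_nonempty (γ : ℕ × ℕ) : (Gon γ).Nonempty :=
  insert_nonempty _ _

theorem sum_Gon_even_pow {R : Type*} [CommRing R] (γ : ℕ × ℕ) (m n : ℕ) :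
    ∑ β ∈ Gon γ, (β.1 : R) ^ (2 * m) * (β.2 : R) ^ (2 * n) =
      #(Gon γ) * (((γ.1 : R) ^ 2) ^ m * ((γ.2 : R) ^ 2) ^ n) := by
  rw [← nsmul_eq_mul, ← sum_const]
  refine sum_congr rfl fun β hβ ↦ ?_
  simp only [Gon, mem_insert, mem_singleton] at hβ
  rcases hβ with rfl | rfl | rfl | rfl <;> simp [pow_mul]

/-- The on-diagonal coefficient matrix `K` of a family `ξ` of multi-indices, which need not
enumerate a full set `𝓘_p`. -/
def onDiagonalMatrix {ι : Type*} (R : Type*) [CommRing R] (ξ : ι → ℕ × ℕ) : Matrix ι ι R :=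
  Matrix.of fun i j ↦ ∑ β ∈ Gon (ξ j), (β.1 : R) ^ (2 * (ξ i).1) * (β.2 : R) ^ (2 * (ξ i).2)

variable {ι R : Type*} [Fintype ι] [DecidableEq ι] [CommRing R]

theorem det_onDiagonalMatrix (ξ : ι → ℕ × ℕ) :
    (onDiagonalMatrix R ξ).det = (∏ j, (#(Gon (ξ j)) : R)) *
      (multiVandermonde (fun i ↦ (OrderIso.finTwoArrowIso ℕ).symm (ξ i))
        fun j s ↦ ((OrderIso.finTwoArrowIso ℕ).symm (ξ j) s : R) ^ 2).det := by
  rw [← Matrix.det_mul_row]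
  congr 1
  ext i j
  simp only [onDiagonalMatrix, multiVandermonde, Matrix.of_apply, sum_Gon_even_pow,
    Fin.prod_univ_two]
  rfl

theorem det_onDiagonalMatrix_ne_zero [IsDomain R] [CharZero R] {ξ : ι → ℕ × ℕ}
    (hξ : Function.Injective ξ) (hlow : IsLowerSet (Set.range ξ)) :
    (onDiagonalMatrix R ξ).det ≠ 0 := by
  let e := (OrderIso.finTwoArrowIso ℕ).symm
  have hlow_comp : IsLowerSet (Set.range (e ∘ ξ)) := by
    rw [Set.range_comp]
    exact hlow.image e
  have sq_injective : Function.Injective fun k : ℕ ↦ (k : R) ^ 2 := fun k l hkl ↦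
    Nat.pow_left_injective two_ne_zero (by simpa only [← Nat.cast_pow, Nat.cast_inj] using hkl)
  rw [det_onDiagonalMatrix]
  refine mul_ne_zero (prod_ne_zero_iff.mpr fun j _ ↦ ?_) ?_
  · exact Nat.cast_ne_zero.mpr (Gon_nonempty (ξ j)).card_ne_zero
  · exact det_multiVandermonde_grid_ne_zero (x := fun _ k ↦ (k : R) ^ 2)
      (e.injective.comp hξ) hlow_comp fun _ ↦ sq_injective

end OnDiagonalMatrix

theorem existsUnique_mulVec_eq_of_isUnit_det {ι R : Type*} [Fintype ι] [DecidableEq ι]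
    [CommRing R] {A : Matrix ι ι R} (hA : IsUnit A.det) (c : ι → R) :
    ∃! ω : ι → R, A.mulVec ω = c := by
  refine ⟨A⁻¹.mulVec c, ?_, ?_⟩
  · simp only [Matrix.mulVec_mulVec, A.mul_nonsing_inv hA, Matrix.one_mulVec]
  · rintro ω rfl
    rw [Matrix.mulVec_mulVec, A.nonsing_inv_mul hA, Matrix.one_mulVec]

theorem on_diagonal_coefficient_matrix_nonsingular_general {ι F : Type*} [Fintype ι]
    [DecidableEq ι] [Field F] [CharZero F] {ξ : ι → ℕ × ℕ} (hξ : Function.Injective ξ)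
    (hlow : IsLowerSet (Set.range ξ)) :
    (onDiagonalMatrix F ξ).det ≠ 0 ∧
    ∀ G : Matrix ι ι F, G.det ≠ 0 →
      ∀ c : ι → F, ∃! ω : ι → F, (onDiagonalMatrix F ξ * G).mulVec ω = c := by
  have hdet : (onDiagonalMatrix F ξ).det ≠ 0 := det_onDiagonalMatrix_ne_zero hξ hlow
  refine ⟨hdet, fun G hG ↦ existsUnique_mulVec_eq_of_isUnit_det ?_⟩
  rw [Matrix.det_mul]
  exact (mul_ne_zero hdet hG).isUnit

/-- non-singularity of the on-diagonal coefficient matrix `K`, and unique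
solvability of the moment linear system whenever `G(h)` is non-singular. -/
theorem on_diagonal_coefficient_matrix_nonsingular
    (p : ℕ) (hp : 1 ≤ p) (Np : ℕ) (hNp : Np = (p + 1) * (p + 2) / 2)
    (ξ : Fin Np → ℕ × ℕ) (hξinj : Function.Injective ξ)
    (hξmem : ∀ i, (ξ i).1 + (ξ i).2 ≤ p)
    (hξsurj : ∀ γ : ℕ × ℕ, γ.1 + γ.2 ≤ p → ∃ i, ξ i = γ)
    (K : Matrix (Fin Np) (Fin Np) ℝ)
    (hK : ∀ i j, K i j = ∑ β ∈ Gon (ξ j),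
      (β.1 : ℝ) ^ (2 * (ξ i).1) * (β.2 : ℝ) ^ (2 * (ξ i).2)) :
    K.det ≠ 0 ∧
    ∀ G : Matrix (Fin Np) (Fin Np) ℝ, G.det ≠ 0 →
      ∀ c : Fin Np → ℝ, ∃! ω : Fin Np → ℝ, (K * G).mulVec ω = c := by
  obtain rfl : K = onDiagonalMatrix ℝ ξ := Matrix.ext hK
  have hlow : IsLowerSet (Set.range ξ) := by
    rintro _ γ hγ ⟨i, rfl⟩
    exact hξsurj γ ((add_le_add hγ.1 hγ.2).trans (hξmem i))
  exact on_diagonal_coefficient_matrix_nonsingular_general hξinj hlow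
end

section
/- For every p ∈ ℕ with p ≥ 2, the off-diagonal coefficient matrix K ∈ ℝ^{N_p×N_p} is non-singular; consequently the off-diagonal moment linear system K G(h) ω(h) = c(h) admits a unique solution whenever G(h) is non-singular. -/
/-- The set `𝓖_γ` of all sign changes of `(γ₁, γ₂)` and of the swapped pair `(γ₂, γ₁)`. -/
def Goff (γ : ℕ × ℕ) : Finset (ℤ × ℤ) :=
  {((γ.1 : ℤ), (γ.2 : ℤ)), (-(γ.1 : ℤ), (γ.2 : ℤ)), ((γ.1 : ℤ), -(γ.2 : ℤ)),
    (-(γ.1 : ℤ), -(γ.2 : ℤ)), ((γ.2 : ℤ), (γ.1 : ℤ)), (-(γ.2 : ℤ), (γ.1 : ℤ)),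
    ((γ.2 : ℤ), -(γ.1 : ℤ)), (-(γ.2 : ℤ), -(γ.1 : ℤ))}

/-!
Up to a nonzero factor depending only on `j`, the entry `K i j` is the value of the symmetric
polynomial `X ^ (m - 1) * Y ^ (n - 1) + X ^ (n - 1) * Y ^ (m - 1)`, where `(m, n) = ξ i`, at the
point `(a ^ 2, b ^ 2)`, where `(a, b) = ξ j`: the summands are invariant under sign changes because
`sgn (β₁ * β₂)` compensates the odd exponents. A vector in the left kernel of `K` is therefore a
symmetric polynomial with exponents in a lower set which vanishes at all points of the grid of
squares indexed by that same lower set. Such a polynomial is zero: its restriction to the first row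
of the grid has as many roots as it has possible monomials, so the polynomial is divisible by the
equation of that row, and the quotient vanishes on the remaining rows and has exponents in the
lower set shifted by one.
-/

open Polynomial
open scoped Polynomial.Bivariate

section LowerSet

variable {R : Type*} [CommRing R] [IsDomain R]

theorem eq_zero_of_eval_eq_zero_of_isLowerSet {T : Set ℕ} (hT : IsLowerSet T) {x : ℕ → R}
    (hx : Function.Injective x) {q : R[X]} (hq : ∀ m ∉ T, q.coeff m = 0)
    (hroot : ∀ m ∈ T, q.eval (x m) = 0) : q = 0 := by
  by_contra hne
  have hdeg : q.natDegree ∈ T :=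
    not_imp_comm.mp (hq q.natDegree) (leadingCoeff_ne_zero.mpr hne)
  refine hne <| eq_zero_of_natDegree_lt_card_of_eval_eq_zero q
    (f := fun m : Fin (q.natDegree + 1) ↦ x m) (hx.comp Fin.val_injective)
    (fun m ↦ hroot m <| hT (Nat.lt_succ_iff.mp m.isLt) hdeg) ?_
  rw [Fintype.card_fin]
  exact Nat.lt_succ_self _

theorem isRoot_C_of_evalEval_eq_zero_of_isLowerSet {S : Set (ℕ × ℕ)} (hS : IsLowerSet S)
    {x : ℕ → R} (hx : Function.Injective x) {f : R[X][Y]}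
    (hf : ∀ m n, (m, n) ∉ S → (f.coeff n).coeff m = 0) {b : R}
    (hroot : ∀ m, (m, 0) ∈ S → f.evalEval (x m) b = 0) : f.IsRoot (C b) := by
  refine eq_zero_of_eval_eq_zero_of_isLowerSet (T := {m | (m, 0) ∈ S})
    (fun m k hkm ↦ hS (Prod.mk_le_mk.mpr ⟨hkm, le_rfl⟩)) hx (fun m hm ↦ ?_) hroot
  rw [eval_eq_sum_range, finsetSum_coeff]
  refine Finset.sum_eq_zero fun n _ ↦ ?_
  have hmn : (m, n) ∉ S := fun h ↦ hm (hS (Prod.mk_le_mk.mpr ⟨le_rfl, n.zero_le⟩) h)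
  rw [← C_pow, coeff_mul_C, hf m n hmn, zero_mul]

theorem eq_zero_of_evalEval_eq_zero_of_isLowerSet {S : Set (ℕ × ℕ)} (hS : IsLowerSet S)
    {x y : ℕ → R} (hx : Function.Injective x) (hy : Function.Injective y) {f : R[X][Y]}
    (hf : ∀ m n, (m, n) ∉ S → (f.coeff n).coeff m = 0)
    (hroot : ∀ m n, (m, n) ∈ S → f.evalEval (x m) (y n) = 0) : f = 0 := by
  induction hd : f.natDegree generalizing f y S with
  | zero =>
    have hrow : f.IsRoot (C (y 0)) :=
      isRoot_C_of_evalEval_eq_zero_of_isLowerSet hS hx hf fun m ↦ hroot m 0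
    obtain ⟨q, rfl⟩ := natDegree_eq_zero.mp hd
    simpa using hrow
  | succ d ih =>
    have hrow : f.IsRoot (C (y 0)) :=
      isRoot_C_of_evalEval_eq_zero_of_isLowerSet hS hx hf fun m ↦ hroot m 0
    have hfactor := mul_divByMonic_eq_iff_isRoot.mpr hrow
    set g := f /ₘ (X - C (C (y 0))) with hg
    have hS' : IsLowerSet {γ : ℕ × ℕ | (γ.1, γ.2 + 1) ∈ S} := fun γ δ hδγ ↦
      hS (Prod.mk_le_mk.mpr ⟨hδγ.1, Nat.succ_le_succ hδγ.2⟩)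
    have hg_coeff (m n : ℕ) (hmn : (m, n + 1) ∉ S) : (g.coeff n).coeff m = 0 := by
      rw [hg, coeff_divByMonic_X_sub_C, finsetSum_coeff]
      refine Finset.sum_eq_zero fun k hk ↦ ?_
      have hmk : (m, k) ∉ S := fun h ↦
        hmn (hS (Prod.mk_le_mk.mpr ⟨le_rfl, (Finset.mem_Icc.mp hk).1⟩) h)
      rw [← C_pow, coeff_C_mul, hf m k hmk, mul_zero]
    have hg_root (m n : ℕ) (hmn : (m, n + 1) ∈ S) : g.evalEval (x m) (y (n + 1)) = 0 := by
      have hzero := hroot m (n + 1) hmn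
      rw [← hfactor, evalEval_mul, evalEval_sub, evalEval_X, evalEval_C, eval_C] at hzero
      exact (mul_eq_zero.mp hzero).resolve_left (sub_ne_zero.mpr (hy.ne n.succ_ne_zero))
    have hg_deg : g.natDegree = d := by
      rw [hg, natDegree_divByMonic f (monic_X_sub_C _), natDegree_X_sub_C, hd,
        Nat.add_sub_cancel]
    have hg_zero : g = 0 :=
      ih hS' (hy.comp (add_left_injective 1)) hg_coeff hg_root hg_deg
    rw [← hfactor, hg_zero, mul_zero]

end LowerSet

section SymmMonomial

variable (R : Type*) [CommSemiring R]

/-- The symmetrised monomial `X ^ m * Y ^ n + X ^ n * Y ^ m` with exponent `γ = (m, n)`; it is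
`2 * X ^ m * Y ^ m` when `m = n`. -/
noncomputable def symmMonomial (γ : ℕ × ℕ) : R[X][Y] :=
  monomial γ.2 (monomial γ.1 1) + monomial γ.1 (monomial γ.2 1)

variable {R}

theorem coeff_coeff_symmMonomial (γ : ℕ × ℕ) (m n : ℕ) :
    ((symmMonomial R γ).coeff n).coeff m =
      (if γ = (m, n) then 1 else 0) + if γ = (n, m) then 1 else 0 := by
  have hmonomial (a b : ℕ) : ((monomial b (monomial a (1 : R))).coeff n).coeff m =
      if a = m ∧ b = n then 1 else 0 := by
    by_cases h : b = n <;> simp [coeff_monomial, h]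
  simp only [symmMonomial, coeff_add, hmonomial, Prod.ext_iff, and_comm]

theorem evalEval_symmMonomial (γ : ℕ × ℕ) (x y : R) :
    (symmMonomial R γ).evalEval x y = x ^ γ.1 * y ^ γ.2 + x ^ γ.2 * y ^ γ.1 := by
  simp [symmMonomial, evalEval]

theorem evalEval_symmMonomial_comm (γ : ℕ × ℕ) (x y : R) :
    (symmMonomial R γ).evalEval x y = (symmMonomial R γ).evalEval y x := by
  simp only [evalEval_symmMonomial]
  ring

/-- The symmetrised generalised Vandermonde matrix: the symmetrised monomials with exponents `η i`,
evaluated at the points of the grid `x × x` with indices `η j`. -/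
noncomputable def symmVandermonde {ι : Type*} (x : ℕ → R) (η : ι → ℕ × ℕ) : Matrix ι ι R :=
  Matrix.of fun i j ↦ (symmMonomial R (η i)).evalEval (x (η j).1) (x (η j).2)

end SymmMonomial

section Nonsingular

variable {R : Type*} [CommRing R] [IsDomain R] [NeZero (2 : R)] {ι : Type*} {η : ι → ℕ × ℕ}

theorem linearIndependent_symmMonomial (hη : Function.Injective η)
    (hle : ∀ i, (η i).2 ≤ (η i).1) : LinearIndependent R fun i ↦ symmMonomial R (η i) := by
  rw [linearIndependent_iff']
  intro s v hv k hk
  have hcoeff := congrArg (fun f : R[X][Y] ↦ (f.coeff (η k).2).coeff (η k).1) hv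
  simp only [finsetSum_coeff, coeff_smul, smul_eq_mul, coeff_coeff_symmMonomial, coeff_zero]
    at hcoeff
  rw [Finset.sum_eq_single_of_mem k hk] at hcoeff
  · refine (mul_eq_zero.mp hcoeff).resolve_right ?_
    rw [if_pos rfl]
    split_ifs <;> simp [one_add_one_eq_two, two_ne_zero]
  · intro i _ hik
    have hne : η i ≠ η k := hη.ne hik
    have hne_swap : η i ≠ ((η k).2, (η k).1) := by
      intro h
      have hi := hle i
      have hk := hle k
      simp only [ne_eq, Prod.ext_iff] at h hne
      omega
    simp [hne, hne_swap]

theorem det_symmVandermonde_ne_zero [Fintype ι] [DecidableEq ι]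
    {S : Set (ℕ × ℕ)} (hS : IsLowerSet S) (hswap : Set.MapsTo Prod.swap S S)
    (hη : Set.BijOn η Set.univ {γ ∈ S | γ.2 ≤ γ.1}) {x : ℕ → R} (hx : Function.Injective x) :
    (symmVandermonde x η).det ≠ 0 := by
  intro hdet
  obtain ⟨v, hv_ne, hv⟩ := Matrix.exists_vecMul_eq_zero_iff.mpr hdet
  have hmem (i : ι) : η i ∈ S ∧ (η i).2 ≤ (η i).1 := hη.mapsTo (Set.mem_univ i)
  set f : R[X][Y] := ∑ i, v i • symmMonomial R (η i) with hf
  have hcoeff (m n : ℕ) (hmn : (m, n) ∉ S) : (f.coeff n).coeff m = 0 := by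
    rw [hf, finsetSum_coeff, finsetSum_coeff]
    refine Finset.sum_eq_zero fun i _ ↦ ?_
    have hne : η i ≠ (m, n) := fun h ↦ hmn (h ▸ (hmem i).1)
    have hne_swap : η i ≠ (n, m) := fun h ↦ hmn (hswap (h ▸ (hmem i).1 : (n, m) ∈ S))
    simp [coeff_coeff_symmMonomial, hne, hne_swap]
  have hroot_of_le (m n : ℕ) (hmn : (m, n) ∈ S) (hle : n ≤ m) : f.evalEval (x m) (x n) = 0 := by
    obtain ⟨j, -, hj⟩ := hη.surjOn ⟨hmn, hle⟩
    have hvj : ∑ i, v i * symmVandermonde x η i j = 0 := congrFun hv j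
    simpa [hf, evalEval_finsetSum, symmVandermonde, hj] using hvj
  have hcomm (a b : R) : f.evalEval a b = f.evalEval b a := by
    simp only [hf, evalEval_finsetSum, evalEval_smul, evalEval_symmMonomial_comm _ a b]
  have hroot (m n : ℕ) (hmn : (m, n) ∈ S) : f.evalEval (x m) (x n) = 0 := by
    rcases le_total n m with hle | hle
    · exact hroot_of_le m n hmn hle
    · exact (hcomm _ _).trans (hroot_of_le n m (hswap hmn) hle)
  have hf_zero : f = 0 := eq_zero_of_evalEval_eq_zero_of_isLowerSet hS hx hx hcoeff hroot
  have hindep : LinearIndependent R fun i ↦ symmMonomial R (η i) :=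
    linearIndependent_symmMonomial (Set.injOn_univ.mp hη.injOn) fun i ↦ (hmem i).2
  exact hv_ne (funext (Fintype.linearIndependent_iff.mp hindep v hf_zero))

end Nonsingular

section Goff

theorem sum_Goff {M : Type*} [AddCommMonoid M] {a b : ℕ} (ha : a ≠ 0) (hb : b ≠ 0)
    {f : ℤ × ℤ → M} (hfst : ∀ x y, f (-x, y) = f (x, y)) (hsnd : ∀ x y, f (x, -y) = f (x, y)) :
    ∑ β ∈ Goff (a, b), f β = (if a = b then 2 else 4) • (f (a, b) + f (b, a)) := by
  split_ifs with hab
  · subst hab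
    have hGoff : Goff (a, a) = {((a : ℤ), (a : ℤ)), (-(a : ℤ), (a : ℤ)), ((a : ℤ), -(a : ℤ)),
        (-(a : ℤ), -(a : ℤ))} := by
      ext β
      simp only [Goff, Finset.mem_insert, Finset.mem_singleton]
      tauto
    rw [hGoff]
    repeat rw [Finset.sum_insert (by
      simp only [Finset.mem_insert, Finset.mem_singleton, Prod.mk.injEq]; omega)]
    simp only [Finset.sum_singleton, hfst, hsnd]
    abel
  · unfold Goff
    repeat rw [Finset.sum_insert (by
      simp only [Finset.mem_insert, Finset.mem_singleton, Prod.mk.injEq]; omega)]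
    simp only [Finset.sum_singleton, hfst, hsnd]
    abel

theorem sum_Goff_sign_mul_pow {R : Type*} [CommRing R] (γ δ : ℕ × ℕ) :
    ∑ β ∈ Goff (γ + 1), ((β.1 * β.2).sign : R) *
        ((β.1 : R) ^ (2 * δ.1 + 1) * (β.2 : R) ^ (2 * δ.2 + 1)) =
      (if γ.1 = γ.2 then 2 else 4) * ((γ.1 + 1) * (γ.2 + 1)) *
        (symmMonomial R δ).evalEval (((γ.1 : R) + 1) ^ 2) (((γ.2 : R) + 1) ^ 2) := by
  have hodd (n : ℕ) : Odd (2 * n + 1) := odd_two_mul_add_one n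
  have hsign (a b : ℕ) : (((a + 1 : ℕ) : ℤ) * ((b + 1 : ℕ) : ℤ)).sign = 1 :=
    Int.sign_eq_one_of_pos (by positivity)
  refine (sum_Goff γ.1.succ_ne_zero γ.2.succ_ne_zero (fun x y ↦ ?_) fun x y ↦ ?_).trans ?_
  · simp [(hodd _).neg_pow]
  · simp [(hodd _).neg_pow]
  · simp only [Nat.succ_eq_add_one, hsign, evalEval_symmMonomial, Nat.add_right_cancel_iff,
      nsmul_eq_mul]
    push_cast
    simp only [← pow_mul]
    ring

end Goff

theorem existsUnique_mulVec_eq {ι 𝕜 : Type*} [Fintype ι] [DecidableEq ι] [Field 𝕜]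
    {A : Matrix ι ι 𝕜} (hA : A.det ≠ 0) (c : ι → 𝕜) : ∃! ω, A.mulVec ω = c := by
  have hunit : IsUnit A := A.isUnit_iff_isUnit_det.mpr hA.isUnit
  have hbij : Function.Bijective A.mulVec :=
    ⟨Matrix.mulVec_injective_iff_isUnit.mpr hunit, Matrix.mulVec_surjective_iff_isUnit.mpr hunit⟩
  exact hbij.existsUnique c

theorem succ_sq_injective (R : Type*) [Semiring R] [CharZero R] :
    Function.Injective fun n : ℕ ↦ ((n : R) + 1) ^ 2 := by
  intro a b hab
  have hab' : (a + 1) ^ 2 = (b + 1) ^ 2 := by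
    exact_mod_cast (show ((a : R) + 1) ^ 2 = ((b : R) + 1) ^ 2 from hab)
  exact Nat.succ_injective (Nat.pow_left_injective two_ne_zero hab')

theorem exists_eq_add_one_and_bijOn {ι : Type*} {S : Set (ℕ × ℕ)} {ξ : ι → ℕ × ℕ}
    (hξ : Set.BijOn ξ Set.univ {γ ∈ S | 1 ≤ γ.2 ∧ γ.2 ≤ γ.1}) :
    ∃ η : ι → ℕ × ℕ, (∀ i, ξ i = η i + 1) ∧
      Set.BijOn η Set.univ {γ | γ + 1 ∈ S ∧ γ.2 ≤ γ.1} := by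
  obtain ⟨η, rfl⟩ : ∃ η : ι → ℕ × ℕ, ξ = fun i ↦ η i + 1 := by
    refine ⟨fun i ↦ ξ i - 1, funext fun i ↦ (tsub_add_cancel_of_le ?_).symm⟩
    obtain ⟨-, hpos, hle⟩ := hξ.mapsTo (Set.mem_univ i)
    exact ⟨hpos.trans hle, hpos⟩
  refine ⟨η, fun _ ↦ rfl, fun i hi ↦ ?_, fun i hi j hj h ↦ ?_, fun γ hγ ↦ ?_⟩
  · obtain ⟨hmem, -, hle⟩ := hξ.mapsTo hi
    exact ⟨hmem, Nat.le_of_succ_le_succ hle⟩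
  · exact hξ.injOn hi hj (congrArg (· + 1) h)
  · obtain ⟨i, hi, hiγ⟩ :=
      hξ.surjOn (a := γ + 1) ⟨hγ.1, Nat.succ_pos _, Nat.succ_le_succ hγ.2⟩
    exact ⟨i, hi, add_right_cancel hiγ⟩

theorem off_diagonal_coefficient_matrix_nonsingular_general {ι 𝕜 : Type*} [Fintype ι]
    [DecidableEq ι] [Field 𝕜] [CharZero 𝕜] {S : Set (ℕ × ℕ)} (hS : IsLowerSet S)
    (hswap : Set.MapsTo Prod.swap S S) (ξ : ι → ℕ × ℕ)
    (hξ : Set.BijOn ξ Set.univ {γ ∈ S | 1 ≤ γ.2 ∧ γ.2 ≤ γ.1}) (K : Matrix ι ι 𝕜)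
    (hK : ∀ i j, K i j = ∑ β ∈ Goff (ξ j), ((β.1 * β.2).sign : 𝕜) *
      ((β.1 : 𝕜) ^ (2 * (ξ i).1 - 1) * (β.2 : 𝕜) ^ (2 * (ξ i).2 - 1))) :
    K.det ≠ 0 ∧ ∀ G : Matrix ι ι 𝕜, G.det ≠ 0 → ∀ c : ι → 𝕜, ∃! ω, (K * G).mulVec ω = c := by
  suffices hdet : K.det ≠ 0 from
    ⟨hdet, fun G hG ↦ existsUnique_mulVec_eq (by rw [Matrix.det_mul]; exact mul_ne_zero hdet hG)⟩
  obtain ⟨η, hξη, hη⟩ := exists_eq_add_one_and_bijOn hξ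
  let weight (j : ι) : 𝕜 :=
    (if (η j).1 = (η j).2 then 2 else 4) * (((η j).1 + 1) * ((η j).2 + 1))
  have hweight (j : ι) : weight j ≠ 0 := by
    refine mul_ne_zero ?_ (mul_ne_zero (Nat.cast_add_one_ne_zero _) (Nat.cast_add_one_ne_zero _))
    split_ifs <;> norm_num
  have hK_eq : K = Matrix.of fun i j ↦
      weight j * symmVandermonde (fun n : ℕ ↦ ((n : 𝕜) + 1) ^ 2) η i j := by
    ext i j
    rw [hK, hξη, hξη]
    exact sum_Goff_sign_mul_pow (η j) (η i)
  rw [hK_eq, Matrix.det_mul_row]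
  exact mul_ne_zero (Finset.prod_ne_zero_iff.mpr fun j _ ↦ hweight j)
    (det_symmVandermonde_ne_zero (S := {γ | γ + 1 ∈ S})
      (fun γ δ hδγ ↦ hS (add_le_add_left hδγ 1)) (fun γ hγ ↦ hswap hγ) hη (succ_sq_injective 𝕜))

/-- non-singularity of the off-diagonal coefficient matrix `K`, and unique
solvability of the off-diagonal moment linear system whenever `G(h)` is non-singular. -/
theorem off_diagonal_coefficient_matrix_nonsingular
    (p : ℕ) (hp : 2 ≤ p) (Np : ℕ)
    (ξ : Fin Np → ℕ × ℕ) (hξinj : Function.Injective ξ)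
    (hξmem : ∀ i, 1 ≤ (ξ i).2 ∧ (ξ i).2 ≤ (ξ i).1 ∧ (ξ i).1 + (ξ i).2 ≤ p)
    (hξsurj : ∀ γ : ℕ × ℕ, 1 ≤ γ.2 → γ.2 ≤ γ.1 → γ.1 + γ.2 ≤ p → ∃ i, ξ i = γ)
    (K : Matrix (Fin Np) (Fin Np) ℝ)
    (hK : ∀ i j, K i j = ∑ β ∈ Goff (ξ j),
      ((β.1 * β.2).sign : ℝ) *
        ((β.1 : ℝ) ^ (2 * (ξ i).1 - 1) * (β.2 : ℝ) ^ (2 * (ξ i).2 - 1))) :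
    K.det ≠ 0 ∧
    ∀ G : Matrix (Fin Np) (Fin Np) ℝ, G.det ≠ 0 →
      ∀ c : Fin Np → ℝ, ∃! ω : Fin Np → ℝ, (K * G).mulVec ω = c := by
  exact off_diagonal_coefficient_matrix_nonsingular_general (S := {γ | γ.1 + γ.2 ≤ p})
    (fun γ δ hδγ hγ ↦ (add_le_add hδγ.1 hδγ.2).trans hγ)
    (fun γ hγ ↦ (add_comm γ.2 γ.1).trans_le hγ) ξ
    ⟨fun i _ ↦ ⟨(hξmem i).2.2, (hξmem i).1, (hξmem i).2.1⟩, hξinj.injOn,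
      fun γ ⟨hsum, hpos, hle⟩ ↦ by simpa using hξsurj γ hpos hle hsum⟩ K hK
end
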